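/- The characteristic polynomial of u = u_β·u_α satisfies det(λI − u) = (λ − 1) · Π_{n=1}^{k} (λ² − 2λ cos φ_n + 1), where cos φ_n = 1 − 2n(N − n + 1)/((r+1)(N−r)). -/

import Mathlib

open Polynomial

/-- The index set of the reduced `(2k+1)`-dimensional space. -/
def Idx (k : ℕ) := {q : Fin (k + 1) × Fin 2 // ¬((q.1 : ℕ) = k ∧ (q.2 : ℕ) = 1)}

instance (k : ℕ) : Fintype (Idx k) := Subtype.fintype _
instance (k : ℕ) : DecidableEq (Idx k) := Subtype.instDecidableEq

/-- The `(2k+1)×(2k+1)` matrix `u_α`. -/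
noncomputable def uAlpha (N r k : ℕ) : Matrix (Idx k) (Idx k) ℝ :=
  fun q' q =>
    (-1 : ℝ) ^ (q.val.2 : ℕ)
        * (1 - 2 * ((k : ℝ) - (q.val.1 : ℕ)) / ((N : ℝ) - r))
        * (if q.val.1 = q'.val.1 ∧ q.val.2 = q'.val.2 then 1 else 0)
      + 2 * Real.sqrt (((k : ℝ) - (q.val.1 : ℕ)) / ((N : ℝ) - r))
          * Real.sqrt (1 - ((k : ℝ) - (q.val.1 : ℕ)) / ((N : ℝ) - r))
          * (if q.val.1 = q'.val.1 ∧ 1 - (q.val.2 : ℕ) = (q'.val.2 : ℕ) then 1 else 0)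

/-- The `(2k+1)×(2k+1)` matrix `u_β`. -/
noncomputable def uBeta (r k : ℕ) : Matrix (Idx k) (Idx k) ℝ :=
  fun q' q =>
    (-1 : ℝ) ^ (q.val.2 : ℕ)
        * (1 - 2 * (((q.val.1 : ℕ) : ℝ) + (q.val.2 : ℕ)) / ((r : ℝ) + 1))
        * (if q.val.1 = q'.val.1 ∧ q.val.2 = q'.val.2 then 1 else 0)
      + 2 * Real.sqrt ((((q.val.1 : ℕ) : ℝ) + (q.val.2 : ℕ)) / ((r : ℝ) + 1))
          * Real.sqrt (1 - (((q.val.1 : ℕ) : ℝ) + (q.val.2 : ℕ)) / ((r : ℝ) + 1))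
          * (if ((q.val.1 : ℕ) : ℤ) - (-1 : ℤ) ^ (q.val.2 : ℕ) = ((q'.val.1 : ℕ) : ℤ)
                ∧ 1 - (q.val.2 : ℕ) = (q'.val.2 : ℕ) then 1 else 0)


open Matrix in
theorem woodbury {n : Type*} [Fintype n] [DecidableEq n] (k : ℕ) (hn : Fintype.card n = 2 * k + 1)
    (V W : Matrix n (Fin k) ℝ) (hV : Vᵀ * V = 1) (hW : Wᵀ * W = 1) (x : ℝ) (hx : 1 < x) :
    (x • (1 : Matrix n n ℝ) - (1 - (2:ℝ) • (W * Wᵀ)) * (1 - (2:ℝ) • (V * Vᵀ))).det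
      = (x - 1) * ((x + 1) ^ 2 • (1 : Matrix (Fin k) (Fin k) ℝ)
          - (4 * x) • ((Wᵀ * V)ᵀ * (Wᵀ * V))).det := by
  set M := Wᵀ * V with hM
  have hM' : Mᵀ = Vᵀ * W := by simp [hM]
  have hx1 : x - 1 ≠ 0 := by linarith
  have hy : x + 1 ≠ 0 := by linarith
  set A := fromCols W (V - (2:ℝ) • (W * M)) with hA
  set B := fromRows ((2:ℝ) • Wᵀ) ((2:ℝ) • Vᵀ) with hB
  have h1 : x • (1 : Matrix n n ℝ) - (1 - (2:ℝ) • (W * Wᵀ)) * (1 - (2:ℝ) • (V * Vᵀ))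
      = (x - 1) • (1 + A * ((x - 1)⁻¹ • B)) := by
    rw [Matrix.mul_smul, smul_add, smul_smul, mul_inv_cancel₀ hx1, one_smul, hA, hB,
      fromCols_mul_fromRows, hM]
    simp only [Matrix.mul_sub, Matrix.sub_mul, Matrix.mul_smul, Matrix.smul_mul, Matrix.mul_one,
      Matrix.one_mul, Matrix.mul_assoc]
    module
  rw [h1, det_smul, det_one_add_mul_comm, hn]
  have h2 : (x - 1) ^ (2 * k + 1) * (1 + (x - 1)⁻¹ • B * A).det
     = (x - 1) * ((x - 1) • (1 + (x - 1)⁻¹ • B * A)).det := by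
    rw [det_smul]
    simp only [Fintype.card_sum, Fintype.card_fin]
    ring
  rw [h2]
  congr 1
  have h3 : (x - 1) • (1 + (x - 1)⁻¹ • B * A)
     = fromBlocks ((x + 1) • (1 : Matrix (Fin k) (Fin k) ℝ)) (-((2:ℝ) • M)) ((2:ℝ) • Mᵀ)
        ((x + 1) • (1 : Matrix (Fin k) (Fin k) ℝ) - (4:ℝ) • (Mᵀ * M)) := by
    rw [Matrix.smul_mul, smul_add, smul_smul, mul_inv_cancel₀ hx1, one_smul, hA, hB,
      fromRows_mul_fromCols, ← fromBlocks_one, fromBlocks_smul, fromBlocks_add]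
    simp only [Matrix.mul_sub, Matrix.smul_mul, Matrix.mul_smul, ← Matrix.mul_assoc, hV, hW,
      Matrix.one_mul, ← hM, ← hM']
    congr 1 <;> module
  rw [h3]
  let _ : Invertible ((x + 1) • (1 : Matrix (Fin k) (Fin k) ℝ)) :=
    ⟨(x + 1)⁻¹ • 1, by simp [smul_smul, hy], by simp [smul_smul, hy]⟩
  have h4 : ⅟ ((x + 1) • (1 : Matrix (Fin k) (Fin k) ℝ)) = (x + 1)⁻¹ • 1 := rfl
  rw [det_fromBlocks₁₁, h4, ← det_mul]
  congr 1
  simp only [Matrix.mul_sub, Matrix.smul_mul, Matrix.mul_smul, Matrix.one_mul, Matrix.mul_one,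
    Matrix.mul_neg]
  match_scalars <;> field_simp <;> ring

theorem det_of_intertwine (k : ℕ) (M Q1 Q2 L U : Matrix (Fin k) (Fin k) ℝ)
    (h1 : M.transpose * Q1 = Q2 * L) (h2 : M * Q2 = Q1 * U) (hQ : Q2.det ≠ 0)
    (s t : ℝ) :
    (s • (1 : Matrix (Fin k) (Fin k) ℝ) - t • (M.transpose * M)).det
      = (s • (1 : Matrix (Fin k) (Fin k) ℝ) - t • (L * U)).det := by
  have : (s • (1 : Matrix (Fin k) (Fin k) ℝ) - t • (M.transpose * M)) * Q2
     = Q2 * (s • (1 : Matrix (Fin k) (Fin k) ℝ) - t • (L * U)) := by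
    simp only [Matrix.mul_sub, Matrix.sub_mul, Matrix.smul_mul, Matrix.mul_smul, Matrix.one_mul,
      Matrix.mul_one]
    rw [Matrix.mul_assoc, h2, ← Matrix.mul_assoc, h1, Matrix.mul_assoc]
  have h := congrArg Matrix.det this
  rw [Matrix.det_mul, Matrix.det_mul, mul_comm] at h
  exact mul_left_cancel₀ hQ h

noncomputable def ee (α β : ℕ → ℝ) (r : ℝ) : ℕ → ℝ
  | 0 => 1
  | i + 1 => α i * (ee α β r i * (r - i) / β i) / (i + 1)

/-- diagonalising the bidiagonal matrix `M` (here `r = R - 1`). -/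
theorem bidiag (k : ℕ) (M : Matrix (Fin k) (Fin k) ℝ) (α β : ℕ → ℝ) (r S : ℝ)
    (hr : (k : ℝ) ≤ r) (hS : (k : ℝ) + 1 ≤ S)
    (hM : ∀ i l : Fin k, M i l = (if l = i then β i else 0) + (if (l : ℕ) = i + 1 then α i else 0))
    (hβ : ∀ i < k, β i ^ 2 = (r - i) * (S - k + i) / ((r + 1) * S))
    (hα : ∀ i < k, α i ^ 2 = (i + 1) * (k - 1 - i) / ((r + 1) * S)) (s t : ℝ) :
    (s • (1 : Matrix (Fin k) (Fin k) ℝ) - t • (M.transpose * M)).det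
      = ∏ m : Fin k, (s - t * ((r - m) * (S - 1 - m) / ((r + 1) * S))) := by
  have hrS : 0 < (r + 1) * S := by
    have : (0:ℝ) ≤ k := k.cast_nonneg
    apply mul_pos <;> linarith
  have hri : ∀ i < k, 0 < r - i := by
    intro i hi
    have : (i:ℝ) + 1 ≤ k := by exact_mod_cast hi
    linarith
  have hβ0 : ∀ i < k, β i ≠ 0 := by
    intro i hi h
    have h1 := hβ i hi
    have := hri i hi
    have h3 : 0 < S - k + i := by
      have : (0:ℝ) ≤ i := i.cast_nonneg
      linarith
    rw [h] at h1
    have : 0 < (r - i) * (S - k + i) / ((r + 1) * S) := by positivity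
    norm_num at h1
    linarith
  have hα0 : ∀ i, i + 1 < k → α i ≠ 0 := by
    intro i hi h
    have h1 := hα i (by omega)
    have h3 : 0 < (k:ℝ) - 1 - i := by
      have : (i:ℝ) + 1 + 1 ≤ k := by exact_mod_cast hi
      linarith
    rw [h] at h1
    have : 0 < ((i:ℝ) + 1) * (k - 1 - i) / ((r + 1) * S) := by positivity
    norm_num at h1
    linarith
  set e2 : ℕ → ℝ := ee α β r with he2
  have he2s : ∀ i, e2 (i + 1) = α i * (e2 i * (r - i) / β i) / (i + 1) := fun i => rfl
  have he20 : ∀ i < k, e2 i ≠ 0 := by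
    intro i
    induction i with
    | zero => intro _; simp [he2, ee]
    | succ i ih =>
      intro hi
      rw [he2s]
      have := ih (by omega)
      have := hα0 i hi
      have := hβ0 i (by omega)
      have := (hri i (by omega)).ne'
      positivity
  set e1 : ℕ → ℝ := fun i => e2 i * (r - i) / β i with he1
  -- the four relations
  have R1 : ∀ i < k, β i * e1 i = e2 i * (r - i) := by
    intro i hi
    have := hβ0 i hi
    simp only [he1]; field_simp
  have R2 : ∀ i < k, β i * e2 i = e1 i * (S - k + i) / ((r + 1) * S) := by
    intro i hi
    have h := hβ0 i hi
    have h2 := hβ i hi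
    have : e1 i * (S - k + i) / ((r + 1) * S) = e2 i / β i * β i ^ 2 := by
      rw [h2]; simp only [he1]; ring
    rw [this]; field_simp
  have R3 : ∀ i < k, α i * e1 i = e2 (i + 1) * (i + 1) := by
    intro i hi
    rw [he2s]
    have : (i:ℝ) + 1 ≠ 0 := by positivity
    simp only [he1]; field_simp
  have R4 : ∀ i < k, α i * e2 (i + 1) = e1 i * (k - 1 - i) / ((r + 1) * S) := by
    intro i hi
    have : (i:ℝ) + 1 ≠ 0 := by positivity
    have h : α i * e2 (i + 1) = α i ^ 2 * e1 i / (i + 1) := by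
      rw [he2s]; simp only [he1]; ring
    rw [h, hα i hi]; field_simp
  -- Pascal-type relations
  have hP : ∀ i m : ℕ, ((i:ℝ) + 1) * (i.choose m) = ((i:ℝ) + 1 - m) * ((i + 1).choose m) := by
    intro i m
    rcases le_or_gt m (i + 1) with h | h
    · have := Nat.add_one_mul_choose_eq i m
      have h2 := Nat.choose_mul_succ_eq i m
      have h3 : ((i.choose m : ℕ) : ℝ) * (i + 1) = ((i+1).choose m) * (((i + 1 - m : ℕ)) : ℝ) := by
        exact_mod_cast h2
      rw [Nat.cast_sub h] at h3
      push_cast at h3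
      linarith
    · rw [Nat.choose_eq_zero_of_lt h, Nat.choose_eq_zero_of_lt (by omega : i < m)]; simp
  have hP2 : ∀ i m : ℕ, ((i:ℝ) - m) * (i.choose m) = ((m:ℝ) + 1) * (i.choose (m + 1)) := by
    intro i m
    rcases le_or_gt m i with h | h
    · have h2 := Nat.choose_succ_right_eq i m
      have h3 : ((i.choose (m+1) : ℕ) : ℝ) * (m + 1) = (i.choose m) * (((i - m : ℕ)) : ℝ) := by
        exact_mod_cast h2
      rw [Nat.cast_sub h] at h3
      linarith
    · rw [Nat.choose_eq_zero_of_lt h, Nat.choose_eq_zero_of_lt (by omega : i < m + 1)]; simp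
  let Q1 : Matrix (Fin k) (Fin k) ℝ := Matrix.of fun i m => e1 i * ((i : ℕ).choose m)
  let Q2 : Matrix (Fin k) (Fin k) ℝ := Matrix.of fun i m => e2 i * ((i : ℕ).choose m)
  let L : Matrix (Fin k) (Fin k) ℝ := Matrix.diagonal fun m => r - m
  let U : Matrix (Fin k) (Fin k) ℝ := Matrix.of fun i m =>
    (if i = m then (S - 1 - m) / ((r + 1) * S) else 0)
      + (if (i : ℕ) + 1 = m then (k - m) / ((r + 1) * S) else 0)
  have H1 : M.transpose * Q1 = Q2 * L := by
    ext ⟨l, hl⟩ ⟨m, hm⟩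
    simp only [L, Matrix.mul_diagonal]
    simp only [Matrix.mul_apply, Matrix.transpose_apply, hM, Q1, Q2, Matrix.of_apply, add_mul,
      Finset.sum_add_distrib, ite_mul, zero_mul, Finset.sum_ite_eq, Finset.mem_univ, if_true]
    rw [show β l * (e1 l * (l.choose m : ℝ)) = (β l * e1 l) * (l.choose m) by ring, R1 l hl]
    rcases l with _ | l
    · rw [Finset.sum_eq_zero (by intro i _; rw [if_neg (by omega)])]
      rcases m with _ | m <;> simp
    · rw [Finset.sum_eq_single (⟨l, by omega⟩ : Fin k)]
      · simp only [if_true]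
        rw [show α l * (e1 l * (l.choose m : ℝ)) = (α l * e1 l) * (l.choose m) by ring,
          R3 l (by omega)]
        have := hP l m
        push_cast
        linear_combination e2 (l + 1) * this
      · intro b _ hb
        rw [if_neg]
        intro h
        apply hb
        ext
        simp only
        omega
      · simp
  have H2 : M * Q2 = Q1 * U := by
    ext ⟨i, hi⟩ ⟨m, hm⟩
    simp only [Matrix.mul_apply, hM, Q1, Q2, U, Matrix.of_apply, add_mul, mul_add,
      Finset.sum_add_distrib, ite_mul, zero_mul, mul_ite, mul_zero, Finset.sum_ite_eq,
      Finset.sum_ite_eq', Finset.mem_univ, if_true]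
    have hl : (∑ x : Fin k, if (x : ℕ) = i + 1 then α i * (e2 x * ((x : ℕ).choose m : ℝ)) else 0)
        = (α i * e2 (i + 1)) * ((i + 1).choose m) := by
      rcases Nat.lt_or_ge (i + 1) k with h | h
      · rw [Finset.sum_eq_single (⟨i + 1, h⟩ : Fin k)]
        · simp only [if_true]; ring
        · intro b _ hb
          rw [if_neg]
          intro h
          apply hb
          ext
          simpa using h
        · simp
      · rw [Finset.sum_eq_zero (by intro i _; rw [if_neg (by omega)]), R4 i hi]
        have : (i:ℝ) + 1 = k := by
          have : i + 1 = k := by omega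
          exact_mod_cast this
        rw [← this]; simp
    rw [hl, R4 i hi, show β i * (e2 i * (i.choose m : ℝ)) = (β i * e2 i) * (i.choose m) by ring,
      R2 i hi]
    rcases m with _ | m
    · rw [Finset.sum_eq_zero (by intro i _; rw [if_neg (by simp)])]
      simp only [Nat.choose_zero_right]
      push_cast; ring
    · rw [Finset.sum_eq_single (⟨m, by omega⟩ : Fin k)]
      · simp only [if_true, Nat.choose_succ_succ]
        have := hP2 i m
        push_cast
        linear_combination - e1 i / ((r + 1) * S) * this
      · intro b _ hb
        rw [if_neg]
        intro h
        apply hb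
        ext
        simpa using h
      · simp
  have hQ : Q2.det ≠ 0 := by
    rw [Matrix.det_of_isLowerTriangular]
    · rw [Finset.prod_ne_zero_iff]
      intro i _
      simpa [Q2] using he20 i i.2
    · intro i j hij
      have : (i : ℕ) < j := hij
      simp [Q2, Nat.choose_eq_zero_of_lt this]
  rw [det_of_intertwine k M Q1 Q2 L U H1 H2 hQ]
  rw [Matrix.det_of_isUpperTriangular]
  · apply Finset.prod_congr rfl
    intro m _
    simp only [L, U, Matrix.sub_apply, Matrix.smul_apply, Matrix.diagonal_mul, Matrix.of_apply,
      Matrix.one_apply_eq, if_true, smul_eq_mul]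
    rw [if_neg (by omega)]
    ring
  · intro i j hij
    have h : (j : ℕ) < i := hij
    have h1 : i ≠ j := by rintro rfl; omega
    simp [L, U, Matrix.diagonal_mul, h1]
    intro h; omega

def p0 (k : ℕ) (i : Fin (k + 1)) : Idx k := ⟨(i, 0), by simp⟩
def p1 (k : ℕ) (i : Fin k) : Idx k := ⟨(i.castSucc, 1), by
  intro h
  have := h.1
  simp only [Fin.val_castSucc] at this
  omega⟩

theorem idx_cases (k : ℕ) (q : Idx k) : (∃ i, q = p0 k i) ∨ (∃ i, q = p1 k i) := by
  obtain ⟨⟨i, s⟩, h⟩ := q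
  fin_cases s
  · exact Or.inl ⟨i, rfl⟩
  · right
    have hi : (i : ℕ) < k := by
      have h1 : (i : ℕ) ≠ k := by simpa using h
      omega
    exact ⟨⟨i, hi⟩, rfl⟩

theorem p0_inj (k : ℕ) (i j : Fin (k + 1)) : p0 k i = p0 k j ↔ i = j := by
  constructor
  · intro h
    exact congrArg (fun q : Idx k => q.val.1) h
  · rintro rfl; rfl

theorem p1_inj (k : ℕ) (i j : Fin k) : p1 k i = p1 k j ↔ i = j := by
  constructor
  · intro h
    exact Fin.castSucc_injective k (congrArg (fun q : Idx k => q.val.1) h)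
  · rintro rfl; rfl

theorem p01 (k : ℕ) (i : Fin (k + 1)) (j : Fin k) : p0 k i = p1 k j ↔ False := by
  constructor
  · intro h
    have := congrArg (fun q : Idx k => q.val.2) h
    simp [p0, p1] at this
  · exact False.elim

theorem p10 (k : ℕ) (i : Fin (k + 1)) (j : Fin k) : p1 k j = p0 k i ↔ False := by
  rw [eq_comm, p01]

theorem card_Idx (k : ℕ) : Fintype.card (Idx k) = 2 * k + 1 := by
  let f : Fin (k + 1) ⊕ Fin k → Idx k := Sum.elim (p0 k) (p1 k)
  have hf : Function.Bijective f := by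
    constructor
    · rintro (a | a) (b | b) h <;> simp [f, p0_inj, p1_inj, p01, p10] at h <;> simp [h]
    · intro q
      rcases idx_cases k q with ⟨i, rfl⟩ | ⟨i, rfl⟩
      · exact ⟨Sum.inl i, rfl⟩
      · exact ⟨Sum.inr i, rfl⟩
  rw [← Fintype.card_of_bijective hf]
  simp; ring

/-- generic pair vectors -/
noncomputable def pv (k : ℕ) (g : Fin k → Fin (k + 1)) (c s : Fin k → ℝ) : Matrix (Idx k) (Fin k) ℝ :=
  Matrix.of fun q i => (if q = p0 k (g i) then c i else 0) - (if q = p1 k i then s i else 0)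

theorem pv_mul (k : ℕ) (g : Fin k → Fin (k + 1)) (c s : Fin k → ℝ)
    (F : Matrix (Idx k) (Fin k) ℝ) (i j : Fin k) :
    ((pv k g c s).transpose * F) i j = c i * F (p0 k (g i)) j - s i * F (p1 k i) j := by
  simp [Matrix.mul_apply, pv, sub_mul, Finset.sum_sub_distrib, ite_mul]

theorem pv_orth (k : ℕ) (g : Fin k → Fin (k + 1)) (hg : Function.Injective g) (c s : Fin k → ℝ)
    (h : ∀ i, c i ^ 2 + s i ^ 2 = 1) : (pv k g c s).transpose * pv k g c s = 1 := by
  ext i j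
  rw [pv_mul]
  simp only [pv, Matrix.of_apply, p0_inj, p1_inj, p01, p10, hg.eq_iff, Matrix.one_apply, if_false]
  by_cases hij : i = j
  · subst hij
    simp only [if_true]; linarith [h i]
  · simp [hij]

theorem pv_p0 (k : ℕ) (g : Fin k → Fin (k + 1)) (c s : Fin k → ℝ) (i : Fin (k + 1)) (j : Fin k) :
    pv k g c s (p0 k i) j = if i = g j then c j else 0 := by
  simp [pv, p0_inj, p01]

theorem pv_p1 (k : ℕ) (g : Fin k → Fin (k + 1)) (c s : Fin k → ℝ) (i : Fin k) (j : Fin k) :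
    pv k g c s (p1 k i) j = if i = j then - s j else 0 := by
  simp only [pv, p1_inj, p10, Matrix.of_apply, if_false]
  split_ifs <;> simp

theorem alpha_eq (N r k : ℕ) (hkN : (k : ℝ) + 1 ≤ (N : ℝ) - r) :
    uAlpha N r k = 1 - (2:ℝ) • (
      pv k Fin.castSucc (fun i => √(((k : ℝ) - (i : ℕ)) / ((N : ℝ) - r)))
        (fun i => √(1 - ((k : ℝ) - (i : ℕ)) / ((N : ℝ) - r))) *
      (pv k Fin.castSucc (fun i => √(((k : ℝ) - (i : ℕ)) / ((N : ℝ) - r)))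
        (fun i => √(1 - ((k : ℝ) - (i : ℕ)) / ((N : ℝ) - r)))).transpose) := by
  have hS : 0 < (N : ℝ) - r := by
    have : (0:ℝ) ≤ k := k.cast_nonneg
    linarith
  have h1 : ∀ i : Fin k, 0 ≤ ((k : ℝ) - (i : ℕ)) / ((N : ℝ) - r) := by
    intro i
    have : ((i : ℕ) : ℝ) ≤ k := by exact_mod_cast i.2.le
    apply div_nonneg <;> linarith
  have h2 : ∀ i : Fin k, 0 ≤ 1 - ((k : ℝ) - (i : ℕ)) / ((N : ℝ) - r) := by
    intro i
    rw [sub_nonneg, div_le_one hS]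
    have : (0 : ℝ) ≤ ((i : ℕ) : ℝ) := Nat.cast_nonneg _
    linarith
  ext q' q
  simp only [Matrix.sub_apply, Matrix.smul_apply, Matrix.mul_apply, Matrix.transpose_apply,
    smul_eq_mul, Matrix.one_apply]
  rcases idx_cases k q' with ⟨i, rfl⟩ | ⟨i, rfl⟩ <;> rcases idx_cases k q with ⟨j, rfl⟩ | ⟨j, rfl⟩ <;>
    simp only [pv_p0, pv_p1, p0_inj, p1_inj, p01, p10]
  · induction i using Fin.lastCases with
    | last =>
      by_cases hj : j = Fin.last k
      · subst hj; simp [uAlpha, p0, Fin.ext_iff, (Fin.is_lt _).ne']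
      · simp [uAlpha, p0, Fin.ext_iff, (Fin.is_lt _).ne', hj, Ne.symm hj]
    | cast i =>
      by_cases hj : j = i.castSucc
      · subst hj
        simp [uAlpha, p0]
        rw [← Real.sqrt_div' _ hS.le, Real.mul_self_sqrt (h1 i)]; ring
      · simp [uAlpha, p0, Ne.symm hj, hj]
        refine Finset.sum_eq_zero fun x _ => ?_
        split_ifs with h h2 <;> first | rfl | (subst h2; exact absurd h hj)
  · induction i using Fin.lastCases with
    | last =>
      simp [uAlpha, p0, p1, Fin.ext_iff, (Fin.is_lt _).ne', (Fin.is_lt _).ne]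
    | cast i =>
      by_cases hj : j = i
      · subst hj
        simp [uAlpha, p0, p1]
        ring
      · simp [uAlpha, p0, p1, Ne.symm hj, hj]
  · by_cases hj : j = i.castSucc
    · subst hj
      simp [uAlpha, p0, p1]
      ring
    · simp [uAlpha, p0, p1, Ne.symm hj, hj]
      refine Finset.sum_eq_zero fun x _ => ?_
      split_ifs with h h2 <;> first | rfl | (subst h2; exact absurd h hj)
  · by_cases hj : j = i
    · subst hj
      simp [uAlpha, p1]
      rw [Real.mul_self_sqrt (h2 j)]; ring
    · simp [uAlpha, p1, Ne.symm hj, hj]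

theorem beta_eq (r k : ℕ) (hkr : k ≤ r) :
    uBeta r k = 1 - (2:ℝ) • (
      pv k Fin.succ (fun i => √((((i : ℕ) : ℝ) + 1) / ((r : ℝ) + 1)))
        (fun i => √(1 - (((i : ℕ) : ℝ) + 1) / ((r : ℝ) + 1))) *
      (pv k Fin.succ (fun i => √((((i : ℕ) : ℝ) + 1) / ((r : ℝ) + 1)))
        (fun i => √(1 - (((i : ℕ) : ℝ) + 1) / ((r : ℝ) + 1)))).transpose) := by
  have h1 : ∀ i : Fin k, 0 ≤ (((i : ℕ) : ℝ) + 1) / ((r : ℝ) + 1) := by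
    intro i
    positivity
  have h2 : ∀ i : Fin k, 0 ≤ 1 - (((i : ℕ) : ℝ) + 1) / ((r : ℝ) + 1) := by
    intro i
    rw [sub_nonneg, div_le_one (by positivity)]
    have : ((i : ℕ) : ℝ) ≤ r := by exact_mod_cast (i.2.le.trans hkr)
    linarith
  ext q' q
  simp only [Matrix.sub_apply, Matrix.smul_apply, Matrix.mul_apply, Matrix.transpose_apply,
    smul_eq_mul, Matrix.one_apply]
  rcases idx_cases k q' with ⟨i, rfl⟩ | ⟨i, rfl⟩ <;> rcases idx_cases k q with ⟨j, rfl⟩ | ⟨j, rfl⟩ <;>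
    simp only [pv_p0, pv_p1, p0_inj, p1_inj, p01, p10]
  · induction i using Fin.cases with
    | zero =>
      by_cases hj : j = 0
      · subst hj; simp [uBeta, p0, Fin.ext_iff]
      · simp [uBeta, p0, Ne.symm hj, hj, (Fin.succ_ne_zero _).symm]
    | succ i =>
      by_cases hj : j = i.succ
      · subst hj
        simp [uBeta, p0]
        rw [Real.mul_self_sqrt (h1 i)]; ring
      · simp [uBeta, p0, Ne.symm hj, hj]
        refine Finset.sum_eq_zero fun x _ => ?_
        split_ifs with h h2 <;> first | rfl | (subst h2; exact absurd h hj)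
  · induction i using Fin.cases with
    | zero =>
      simp [uBeta, p0, p1, (Fin.succ_ne_zero _).symm]
      intro h; exfalso; omega
    | succ i =>
      by_cases hj : j = i
      · subst hj
        simp [uBeta, p0, p1]
        ring
      · have : (j : ℕ) ≠ i := fun h => hj (Fin.ext h)
        simp [uBeta, p0, p1, Ne.symm hj, hj, this]
  · by_cases hj : j = i.succ
    · subst hj
      simp [uBeta, p0, p1]
      ring
    · have : ¬ ((j : ℕ) : ℤ) - 1 = (i : ℕ) := by
        intro h
        apply hj
        ext
        simp only [Fin.val_succ]
        omega
      simp [uBeta, p0, p1, Ne.symm hj, hj, this]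
      refine Finset.sum_eq_zero fun x _ => ?_
      split_ifs with h h2 <;> first | rfl | (subst h2; exact absurd h hj)
  · by_cases hj : j = i
    · subst hj
      simp [uBeta, p1]
      rw [Real.mul_self_sqrt (h2 j)]; ring
    · simp [uBeta, p1, Ne.symm hj, hj]

theorem stmt14 (N r k : ℕ) (hk : 0 < k) (hkr : k ≤ r) (hkN : k < N - r) :
    (uBeta r k * uAlpha N r k).charpoly
      = (X - 1) * ∏ n ∈ Finset.Icc 1 k,
          (X ^ 2
            - C (2 * (1 - 2 * (n : ℝ) * ((N : ℝ) - n + 1) / (((r : ℝ) + 1) * ((N : ℝ) - r)))) * X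
            + 1) := by
  have hkN' : (k : ℝ) + 1 ≤ (N : ℝ) - r := by
    have : k + 1 + r ≤ N := by omega
    have : (k : ℝ) + 1 + r ≤ N := by exact_mod_cast this
    linarith
  have hkr' : (k : ℝ) ≤ r := by exact_mod_cast hkr
  have hk0 : (0:ℝ) ≤ k := k.cast_nonneg
  have hS : 0 < (N : ℝ) - r := by linarith
  have hR : 0 < (r : ℝ) + 1 := by positivity
  have ha1 : ∀ i : ℕ, i ≤ k → 0 ≤ ((k : ℝ) - (i : ℕ)) / ((N : ℝ) - r) := by
    intro i hi
    have : ((i : ℕ) : ℝ) ≤ k := by exact_mod_cast hi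
    apply div_nonneg <;> linarith
  have ha2 : ∀ i : ℕ, 0 ≤ 1 - ((k : ℝ) - (i : ℕ)) / ((N : ℝ) - r) := by
    intro i
    rw [sub_nonneg, div_le_one hS]
    have : (0 : ℝ) ≤ ((i : ℕ) : ℝ) := Nat.cast_nonneg _
    linarith
  have hb1 : ∀ i : ℕ, 0 ≤ (((i : ℕ) : ℝ) + 1) / ((r : ℝ) + 1) := by
    intro i
    positivity
  have hb2 : ∀ i : ℕ, i < k → 0 ≤ 1 - (((i : ℕ) : ℝ) + 1) / ((r : ℝ) + 1) := by
    intro i hi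
    rw [sub_nonneg, div_le_one (by positivity)]
    have : ((i : ℕ) : ℝ) ≤ r := by exact_mod_cast (hi.le.trans hkr)
    linarith
  apply Polynomial.eq_of_infinite_eval_eq
  apply Set.Infinite.mono (s := Set.Ioi 1) _ (Set.Ioi_infinite 1)
  intro x hx
  have hx : 1 < x := hx
  simp only [Set.mem_ofPred_eq]
  rw [Matrix.eval_charpoly, show Matrix.scalar (Idx k) x = x • (1 : Matrix (Idx k) (Idx k) ℝ) by
      rw [Matrix.smul_one_eq_diagonal]; rfl, alpha_eq N r k hkN', beta_eq r k hkr]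
  rw [woodbury k (card_Idx k) _ _ (pv_orth k _ (Fin.castSucc_injective k) _ _ _)
    (pv_orth k _ (Fin.succ_injective k) _ _ _) x hx]
  rotate_left
  · intro i
    rw [Real.sq_sqrt (ha1 i i.2.le), Real.sq_sqrt (ha2 i)]; ring
  · intro i
    rw [Real.sq_sqrt (hb1 i), Real.sq_sqrt (hb2 i i.2)]; ring
  rw [bidiag k _
    (fun i => √(((i : ℝ) + 1) / ((r : ℝ) + 1)) * √(((k : ℝ) - ((i + 1 : ℕ) : ℝ)) / ((N : ℝ) - r)))
    (fun i => √(1 - ((i : ℝ) + 1) / ((r : ℝ) + 1)) * √(1 - ((k : ℝ) - i) / ((N : ℝ) - r)))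
    r ((N : ℝ) - r) hkr' hkN']
  · rw [Polynomial.eval_mul, Polynomial.eval_prod]
    simp only [eval_sub, eval_X, eval_one]
    congr 1
    rw [Fin.prod_univ_eq_prod_range (fun m : ℕ => (x + 1) ^ 2 - 4 * x *
      (((r : ℝ) - m) * ((N : ℝ) - r - 1 - m) / ((r + 1) * ((N : ℝ) - r)))) k]
    rw [Finset.range_eq_Ico, ← Finset.Ico_add_one_right_eq_Icc,
      ← Finset.prod_Ico_add' _ 0 k 1]
    apply Finset.prod_congr rfl
    intro m _
    simp only [eval_add, eval_sub, eval_mul, eval_pow, eval_X, eval_one, eval_C]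
    push_cast
    field_simp
    ring
  · intro i l
    rw [pv_mul, pv_p0, pv_p1]
    rw [add_comm]
    simp only [Fin.ext_iff, Fin.val_succ, Fin.val_castSucc, mul_ite, mul_zero, mul_neg]
    by_cases h : (l : ℕ) = i + 1
    · simp [h]
    · have h' : ¬ ((i : ℕ) + 1 = l) := fun hh => h hh.symm
      by_cases h2 : (l : ℕ) = i
      · simp [h2]
      · have h2' : ¬ ((i : ℕ) = l) := fun hh => h2 hh.symm
        simp [h, h', h2, h2']
  · intro i hi
    rw [mul_pow, Real.sq_sqrt (hb2 i hi), Real.sq_sqrt (ha2 i)]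
    field_simp
    ring
  · intro i hi
    rw [mul_pow, Real.sq_sqrt (hb1 i), Real.sq_sqrt (ha1 (i + 1) hi)]
    push_cast
    field_simp
    ring
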